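/- Let G be a connected finite simple graph of order n. Then n − Γ(G) ≤ τ(G), and if moreover τ(G) ≥ 2, then τ(G)/2 + 1 ≤ n − Γ(G) (equivalently, τ(G) + 2 ≤ 2(n − Γ(G))). -/

import Mathlib

/-!
The complement of a minimum vertex cover is a maximal independent set, hence a minimal dominating
set; this gives `n - Γ ≤ τ` (`isMinDomSet_compl`).

For the lower bound, let `D` be a minimal dominating set with `|D| = Γ`, let `C` be its complement
and `B` the set of vertices of `D` having a neighbour in `D`. By minimality every `b ∈ B` has a
private neighbour in `C`, i.e. a vertex of `C` whose only neighbour in `D` is `b`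
(`exists_private`), so `|B| ≤ |C|`. The set `C ∪ B` is a vertex cover. If `B = ∅` this gives
`τ ≤ |C|`, which suffices since `τ ≥ 2`. Otherwise take adjacent `b₁, b₂ ∈ B` and a private
neighbour `c₁` of `b₁`: as `c₁` and `b₂` are not adjacent and all their neighbours lie in `C ∪ B`,
the set `(C ∪ B) \ {c₁, b₂}` is still a vertex cover, so `τ ≤ |C| + |B| - 2 ≤ 2|C| - 2`.
-/

/-- `D` is a dominating set of `G`: every vertex is in `D` or has a neighbour in `D`. -/
def IsDomSet {V : Type*} (G : SimpleGraph V) (D : Finset V) : Prop :=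
  ∀ v : V, v ∈ D ∨ ∃ u ∈ D, G.Adj u v

/-- `D` is a minimal dominating set of `G`. -/
def IsMinDomSet {V : Type*} (G : SimpleGraph V) (D : Finset V) : Prop :=
  IsDomSet G D ∧ ∀ D' : Finset V, D' ⊂ D → ¬ IsDomSet G D'

/-- The upper domination number `Γ(G)`: maximum cardinality of a minimal dominating set. -/
noncomputable def upperDomNum {V : Type*} [Fintype V] (G : SimpleGraph V) : ℕ :=
  sSup {n : ℕ | ∃ D : Finset V, IsMinDomSet G D ∧ D.card = n}

/-- `C` is a vertex cover of `G`. -/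
def IsVertexCover {V : Type*} (G : SimpleGraph V) (C : Finset V) : Prop :=
  ∀ u v : V, G.Adj u v → u ∈ C ∨ v ∈ C

/-- The vertex cover number `τ(G)`: minimum cardinality of a vertex cover. -/
noncomputable def tauNum {V : Type*} [Fintype V] (G : SimpleGraph V) : ℕ :=
  sInf {n : ℕ | ∃ C : Finset V, IsVertexCover G C ∧ C.card = n}

theorem tauNum_le {V : Type*} [Fintype V] {G : SimpleGraph V} {C : Finset V}
    (hC : IsVertexCover G C) : tauNum G ≤ C.card :=
  Nat.sInf_le ⟨C, hC, rfl⟩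

theorem exists_tauNum {V : Type*} [Fintype V] (G : SimpleGraph V) :
    ∃ C : Finset V, IsVertexCover G C ∧ C.card = tauNum G :=
  Nat.sInf_mem (s := {n : ℕ | ∃ C : Finset V, IsVertexCover G C ∧ C.card = n})
    ⟨_, Finset.univ, fun _ _ _ => Or.inl (Finset.mem_univ _), rfl⟩

theorem bddAbove_minDom {V : Type*} [Fintype V] (G : SimpleGraph V) :
    BddAbove {n : ℕ | ∃ D : Finset V, IsMinDomSet G D ∧ D.card = n} := by
  refine ⟨Fintype.card V, ?_⟩
  rintro _ ⟨D, -, rfl⟩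
  exact Finset.card_le_univ D

theorem isMinDomSet_compl {V : Type*} [Fintype V] [DecidableEq V] {G : SimpleGraph V}
    {C : Finset V} (hC : IsVertexCover G C) (hmin : C.card = tauNum G) :
    IsMinDomSet G Cᶜ := by
  refine ⟨fun v => ?_, fun D' hD' hdom => ?_⟩
  · by_contra! h
    obtain ⟨hv, hu⟩ := h
    simp only [Finset.mem_compl, not_not] at hv hu
    -- All neighbours of `v` lie in `C`, so `v` could be dropped from the minimum cover.
    have hcov : IsVertexCover G (C.erase v) := by
      intro a b hab
      have h1 := hC a b hab
      have hne := hab.ne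
      have h2 := hu a
      have h3 := hu b
      have hba := hab.symm
      grind
    have h1 := tauNum_le hcov
    have h2 := Finset.card_erase_lt_of_mem hv
    omega
  · obtain ⟨x, hx, hxD⟩ := Finset.exists_of_ssubset hD'
    rcases hdom x with h | ⟨u, hu, hux⟩
    · exact hxD h
    · have h1 := hD'.1 hu
      simp only [Finset.mem_compl] at hx h1
      exact (hC u x hux).elim h1 hx

theorem exists_upperDomNum {V : Type*} [Fintype V] (G : SimpleGraph V) :
    ∃ D : Finset V, IsMinDomSet G D ∧ D.card = upperDomNum G := by
  classical
  obtain ⟨C, hC, hmin⟩ := exists_tauNum G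
  exact Nat.sSup_mem (s := {n : ℕ | ∃ D : Finset V, IsMinDomSet G D ∧ D.card = n})
    ⟨_, _, isMinDomSet_compl hC hmin, rfl⟩ (bddAbove_minDom G)

/-- A vertex of a minimal dominating set `D` that has a neighbour in `D` has a private neighbour
outside `D`: were it its own only private neighbour, it would be isolated in `D`. -/
theorem exists_private {V : Type*} {G : SimpleGraph V} {D : Finset V} (hD : IsMinDomSet G D)
    {b : V} (hb : b ∈ D) (hn : ∃ u ∈ D, G.Adj u b) :
    ∃ c, c ∉ D ∧ G.Adj b c ∧ ∀ u ∈ D, G.Adj u c → u = b := by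
  classical
  have h := hD.2 _ (Finset.erase_ssubset hb)
  unfold IsDomSet at h
  push Not at h
  obtain ⟨c, hc, hcu⟩ := h
  have hpriv : ∀ u ∈ D, G.Adj u c → u = b := by
    intro u hu huc
    by_contra hne
    exact hcu u (Finset.mem_erase.2 ⟨hne, hu⟩) huc
  have hcD : c ∉ D := by
    intro hcD
    have hcb : c = b := by
      by_contra hne
      exact hc (Finset.mem_erase.2 ⟨hne, hcD⟩)
    subst hcb
    obtain ⟨u, hu, huc⟩ := hn
    exact huc.ne (hpriv u hu huc)
  refine ⟨c, hcD, ?_, hpriv⟩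
  rcases hD.1 c with h | ⟨u, hu, huc⟩
  · exact absurd h hcD
  · exact hpriv u hu huc ▸ huc

theorem stmt6 {V : Type*} [Fintype V] (G : SimpleGraph V) (hconn : G.Connected) :
    Fintype.card V - upperDomNum G ≤ tauNum G ∧
    (2 ≤ tauNum G → tauNum G + 2 ≤ 2 * (Fintype.card V - upperDomNum G)) := by
  classical
  constructor
  · obtain ⟨C, hC, hmin⟩ := exists_tauNum G
    have h1 : Cᶜ.card ≤ upperDomNum G :=
      le_csSup (bddAbove_minDom G) ⟨_, isMinDomSet_compl hC hmin, rfl⟩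
    have h2 := Finset.card_add_card_compl C
    omega
  · intro hτ
    obtain ⟨D, hD, hcard⟩ := exists_upperDomNum G
    have hk : Dᶜ.card = Fintype.card V - upperDomNum G := by
      rw [Finset.card_compl, hcard]
    rw [← hk]
    set B := D.filter (fun b => ∃ u ∈ D, G.Adj u b) with hB
    have hmemB : ∀ b, b ∈ B ↔ b ∈ D ∧ ∃ u ∈ D, G.Adj u b := by simp [hB]
    have hcov : IsVertexCover G (Dᶜ ∪ B) := by
      intro u v huv
      simp only [Finset.mem_union, Finset.mem_compl, hmemB]
      by_cases hu : u ∈ D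
      · by_cases hv : v ∈ D
        · exact Or.inl (Or.inr ⟨hu, v, hv, huv.symm⟩)
        · exact Or.inr (Or.inl hv)
      · exact Or.inl (Or.inl hu)
    have hunion := Finset.card_union_le Dᶜ B
    rcases B.eq_empty_or_nonempty with hE | ⟨b₁, hb₁⟩
    · have h1 := tauNum_le hcov
      rw [hE, Finset.union_empty] at h1
      omega
    · have hp : ∀ b, ∃ c, b ∈ B → c ∉ D ∧ G.Adj b c ∧ ∀ u ∈ D, G.Adj u c → u = b := by
        intro b
        by_cases hb : b ∈ B
        · obtain ⟨c, hc⟩ := exists_private hD ((hmemB b).1 hb).1 ((hmemB b).1 hb).2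
          exact ⟨c, fun _ => hc⟩
        · exact ⟨b, fun h => absurd h hb⟩
      choose p hp using hp
      have hBC : B.card ≤ Dᶜ.card := by
        refine Finset.card_le_card_of_injOn p (fun b hb => ?_) (fun b hb b' hb' h => ?_)
        · simpa using (hp b hb).1
        · exact (hp b' hb').2.2 b ((hmemB b).1 hb).1 (h ▸ (hp b hb).2.1)
      obtain ⟨hb₁D, b₂, hb₂D, hadj⟩ := (hmemB b₁).1 hb₁
      have hb₂ : b₂ ∈ B := (hmemB b₂).2 ⟨hb₂D, b₁, hb₁D, hadj.symm⟩
      obtain ⟨hcD, hbc, hpriv⟩ := hp b₁ hb₁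
      set c := p b₁
      have hcb : c ≠ b₂ := fun h => hcD (h ▸ hb₂D)
      have hnadj : ¬ G.Adj b₂ c := fun h => hadj.ne (hpriv b₂ hb₂D h)
      -- A vertex outside `Dᶜ ∪ B` is neither adjacent to `c` nor to `b₂`.
      have hout : ∀ x, x ∉ Dᶜ ∪ B → ¬ G.Adj x c ∧ ¬ G.Adj x b₂ := by
        intro x hx
        simp only [Finset.mem_union, Finset.mem_compl, not_or, not_not] at hx
        refine ⟨fun h => hx.2 (hpriv x hx.1 h ▸ hb₁), fun h => hx.2 ?_⟩
        exact (hmemB x).2 ⟨hx.1, b₂, hb₂D, h.symm⟩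
      have hcov' : IsVertexCover G (((Dᶜ ∪ B).erase c).erase b₂) := by
        intro u v huv
        have h1 := hcov u v huv
        have h2 := hout u
        have h3 := hout v
        have h4 := huv.symm
        have h5 := huv.ne
        simp only [Finset.mem_erase]
        grind
      have h1 := tauNum_le hcov'
      have hcU : c ∈ Dᶜ ∪ B := Finset.mem_union_left _ (Finset.mem_compl.2 hcD)
      have hbU : b₂ ∈ (Dᶜ ∪ B).erase c :=
        Finset.mem_erase.2 ⟨hcb.symm, Finset.mem_union_right _ hb₂⟩
      have h2 := Finset.card_erase_add_one hbU
      have h3 := Finset.card_erase_add_one hcU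
      omega
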